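/- Let d ≥ 2 and let h_* be the critical level for level-set percolation of the Gaussian free field on the (d+1)-regular tree (characterized by λ_{h_*} = 1), and u_* the critical level for vacant-set percolation of random interlacements, given by d·exp(−u_*(d−1)²/d) = 1. Then 0 ≤ h_Δ < h_* ≤ h_□ < √(2u_*), where h_Δ and h_□ are defined by d·Φ̄(h_Δ(d−1)/√d) = 1 and λ_0·exp(−h_□²(d−1)²/(2d)) = 1. In particular 0 < h_* < √(2u_*). -/

import Mathlib

open MeasureTheory ProbabilityTheory

/-!
After scaling, `λ_h / d` is the norm on `L²(N(0, v))` of the Mehler kernel `K` with correlation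
`ρ = 1 / d` and `v = d / (d² - 1)`, compressed to the half-line `[h, ∞)`.

* As `K (-a) (-y) = K a y`, the squared Hilbert–Schmidt norm of `K` over `[0, ∞) × ℝ` is half of
  the full one, `1 / (1 - ρ²)`; this gives `λ_0 < d` once `d² > 2`, hence `h_□ < √(2 u_*)`.
* From a starting point `a > h`, the Ornstein–Uhlenbeck transition law of `K` charges `[h, ∞)` more
  than it does from `h`. Testing the compression on the constant `1` thus gives
  `λ_h > d Φ̄(h (d - 1) / √d)`, hence `h_Δ < h_*`.
* Translation by `h ≥ 0` conjugates the compression to `[h, ∞)` to an integral operator on `[0, ∞)`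
  whose kernel is at most `exp (-h² (d - 1)² / (2 d)) * K`, hence `h_* ≤ h_□`.
-/

open scoped ENNReal NNReal

section L2Bound

variable {α : Type*} [MeasurableSpace α] {μ : Measure α} {k : α → α → ℝ≥0∞} {C : ℝ≥0∞}

/-- `C` bounds the operator norm on `L²(μ)` of the integral operator with nonnegative kernel `k`,
tested on measurable functions with values in `[0, ∞]` so that no integrability is required. -/
def IsL2Bound (k : α → α → ℝ≥0∞) (μ : Measure α) (C : ℝ≥0∞) : Prop :=
  ∀ F : α → ℝ≥0∞, Measurable F →
    ∫⁻ a, (∫⁻ y, k a y * F y ∂μ) ^ 2 ∂μ ≤ C ^ 2 * ∫⁻ a, F a ^ 2 ∂μ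

theorem isL2Bound_of_bounded [SFinite μ] (hk : Measurable (Function.uncurry k))
    (h : ∀ F : α → ℝ≥0∞, Measurable F → (∃ n : ℕ, ∀ a, F a ≤ n) →
      ∫⁻ a, (∫⁻ y, k a y * F y ∂μ) ^ 2 ∂μ ≤ C ^ 2 * ∫⁻ a, F a ^ 2 ∂μ) :
    IsL2Bound k μ C := by
  intro F hF
  let G (n : ℕ) (y : α) : ℝ≥0∞ := min (F y) n
  have hG (n : ℕ) : Measurable (G n) := hF.min measurable_const
  have hG_sup (y : α) : ⨆ n, G n y = F y := by
    rw [← inf_iSup_eq, ENNReal.iSup_natCast, inf_top_eq]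
  have hkG (n : ℕ) : Measurable fun p : α × α => k p.1 p.2 * G n p.2 :=
    hk.mul ((hG n).comp measurable_snd)
  have hkG_mono (a : α) : Monotone fun n y => k a y * G n y := fun m n hmn y =>
    mul_le_mul_right (min_le_min_left _ (Nat.cast_le.2 hmn)) _
  have inner (a : α) : ∫⁻ y, k a y * F y ∂μ = ⨆ n, ∫⁻ y, k a y * G n y ∂μ := by
    rw [← lintegral_iSup (f := fun n y => k a y * G n y)
      (fun n => (hkG n).comp measurable_prodMk_left) (hkG_mono a)]
    simp only [← ENNReal.mul_iSup, hG_sup]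
  calc ∫⁻ a, (∫⁻ y, k a y * F y ∂μ) ^ 2 ∂μ
      = ⨆ n, ∫⁻ a, (∫⁻ y, k a y * G n y ∂μ) ^ 2 ∂μ := by
        rw [← lintegral_iSup (fun n => (hkG n).lintegral_prod_right'.pow_const 2)
          fun m n hmn a => pow_le_pow_left' (lintegral_mono (hkG_mono a hmn)) 2]
        simp only [inner, ENNReal.iSup_pow]
    _ ≤ C ^ 2 * ∫⁻ a, F a ^ 2 ∂μ := iSup_le fun n => by
        refine (h _ (hG n) ⟨n, fun a => min_le_right _ _⟩).trans ?_
        gcongr with a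
        exact min_le_left _ _

theorem sq_lintegral_mul_le {f g : α → ℝ≥0∞} (hf : AEMeasurable f μ) (hg : AEMeasurable g μ) :
    (∫⁻ x, f x * g x ∂μ) ^ 2 ≤ (∫⁻ x, f x ^ 2 ∂μ) * ∫⁻ x, g x ^ 2 ∂μ := by
  have holder := ENNReal.lintegral_mul_le_Lp_mul_Lq μ .two_two hf hg
  simp only [Pi.mul_apply, ENNReal.rpow_two] at holder
  calc (∫⁻ x, f x * g x ∂μ) ^ 2
      ≤ ((∫⁻ x, f x ^ 2 ∂μ) ^ (1 / 2 : ℝ) * (∫⁻ x, g x ^ 2 ∂μ) ^ (1 / 2 : ℝ)) ^ 2 := by gcongr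
    _ = (∫⁻ x, f x ^ 2 ∂μ) * ∫⁻ x, g x ^ 2 ∂μ := by
        rw [mul_pow, ← ENNReal.rpow_mul_natCast, ← ENNReal.rpow_mul_natCast]
        norm_num

theorem isL2Bound_of_lintegral_lintegral_sq_le [SFinite μ]
    (hk : Measurable (Function.uncurry k)) (hC : ∫⁻ a, ∫⁻ y, k a y ^ 2 ∂μ ∂μ ≤ C ^ 2) :
    IsL2Bound k μ C := by
  intro F hF
  calc ∫⁻ a, (∫⁻ y, k a y * F y ∂μ) ^ 2 ∂μ
      ≤ ∫⁻ a, (∫⁻ y, k a y ^ 2 ∂μ) * ∫⁻ y, F y ^ 2 ∂μ ∂μ :=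
        lintegral_mono fun a =>
          sq_lintegral_mul_le (hk.comp measurable_prodMk_left).aemeasurable hF.aemeasurable
    _ = (∫⁻ a, ∫⁻ y, k a y ^ 2 ∂μ ∂μ) * ∫⁻ y, F y ^ 2 ∂μ :=
        lintegral_mul_const _ (hk.pow_const 2).lintegral_prod_right'
    _ ≤ C ^ 2 * ∫⁻ y, F y ^ 2 ∂μ := by gcongr

theorem IsL2Bound.lt_of_ae_lt_lintegral [IsFiniteMeasure μ] [NeZero μ] {m : ℝ≥0∞}
    (hC : IsL2Bound k μ C) (hk : Measurable (Function.uncurry k))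
    (hm : ∀ᵐ a ∂μ, m < ∫⁻ y, k a y ∂μ) : m < C := by
  by_contra! hCm
  obtain ⟨a, ha⟩ := hm.exists
  have h_lt : ∫⁻ _, m ^ 2 ∂μ < ∫⁻ a, (∫⁻ y, k a y ∂μ) ^ 2 ∂μ := by
    refine lintegral_strict_mono (NeZero.ne μ)
      (hk.lintegral_prod_right'.pow_const 2).aemeasurable ?_ ?_
    · simpa using ENNReal.mul_ne_top (by simp [ha.ne_top]) (measure_ne_top μ _)
    · filter_upwards [hm] with a ha using ENNReal.pow_lt_pow_left two_ne_zero ha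
  have h_le : ∫⁻ a, (∫⁻ y, k a y ∂μ) ^ 2 ∂μ ≤ C ^ 2 * μ Set.univ := by
    simpa using hC 1 measurable_one
  refine (h_lt.trans_le h_le).not_ge ?_
  rw [lintegral_const]
  gcongr

/-- A change of variables `φ` with Jacobian `s ^ 2` acts on `L²` as `F ↦ s * F ∘ φ`, which
conjugates `l` to the kernel `s a * l (φ a) (φ y) * s y`. -/
theorem IsL2Bound.of_changeOfVariables {β : Type*} [MeasurableSpace β] {ν : Measure β} [SFinite ν]
    {l : β → β → ℝ≥0∞} {φ : α → β} {s : α → ℝ≥0∞} {e : ℝ≥0∞} (hC : IsL2Bound k μ C)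
    (hl : Measurable (Function.uncurry l)) (hφ : Measurable φ) (hs : Measurable s)
    (hν : ∀ u : β → ℝ≥0∞, Measurable u → ∫⁻ b, u b ∂ν = ∫⁻ a, s a ^ 2 * u (φ a) ∂μ) (he : e ≠ ∞)
    (h_le : ∀ᵐ a ∂μ, ∀ᵐ y ∂μ, s a * l (φ a) (φ y) * s y ≤ e * k a y) :
    IsL2Bound l ν (e * C) := by
  intro F hF
  have h_inner : ∀ᵐ a ∂μ,
      s a * ∫⁻ y, l (φ a) y * F y ∂ν ≤ e * ∫⁻ y, k a y * (s y * F (φ y)) ∂μ := by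
    filter_upwards [h_le] with a ha
    have hlF : Measurable fun y => l (φ a) y * F y := hl.of_uncurry_left.mul hF
    rw [hν _ hlF, ← lintegral_const_mul' _ _ he]
    refine (lintegral_const_mul_le _ _).trans (lintegral_mono_ae ?_)
    filter_upwards [ha] with y hy
    calc s a * (s y ^ 2 * (l (φ a) (φ y) * F (φ y)))
        = s a * l (φ a) (φ y) * s y * (s y * F (φ y)) := by ring
      _ ≤ e * k a y * (s y * F (φ y)) := by gcongr
      _ = e * (k a y * (s y * F (φ y))) := mul_assoc _ _ _
  have hlF : Measurable fun b => ∫⁻ y, l b y * F y ∂ν :=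
    (hl.mul (hF.comp measurable_snd)).lintegral_prod_right'
  calc ∫⁻ b, (∫⁻ y, l b y * F y ∂ν) ^ 2 ∂ν
      = ∫⁻ a, (s a * ∫⁻ y, l (φ a) y * F y ∂ν) ^ 2 ∂μ := by
        simp only [mul_pow, hν _ (hlF.pow_const 2)]
    _ ≤ ∫⁻ a, (e * ∫⁻ y, k a y * (s y * F (φ y)) ∂μ) ^ 2 ∂μ := by
        refine lintegral_mono_ae ?_
        filter_upwards [h_inner] with a ha
        gcongr
    _ ≤ e ^ 2 * (C ^ 2 * ∫⁻ a, (s a * F (φ a)) ^ 2 ∂μ) := by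
        simp only [mul_pow e]
        rw [lintegral_const_mul' _ _ (by finiteness)]
        gcongr
        exact hC _ (hs.mul (hF.comp hφ))
    _ = (e * C) ^ 2 * ∫⁻ b, F b ^ 2 ∂ν := by
        rw [hν _ (hF.pow_const 2)]
        simp only [mul_pow, mul_assoc]

end L2Bound

section IntegralOperator

variable {α : Type*} [MeasurableSpace α] {μ : Measure α}

/-- `T` is the integral operator on `L²(μ)` with kernel `k`. -/
def HasIntegralKernel (T : Lp ℝ 2 μ →L[ℝ] Lp ℝ 2 μ) (k : α → α → ℝ) : Prop :=
  ∀ f : Lp ℝ 2 μ, T f =ᵐ[μ] fun a => ∫ y, k a y * f y ∂μ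

/-- `P` is multiplication on `L²(μ)` by the indicator function of `S`. -/
def IsRestriction (P : Lp ℝ 2 μ →L[ℝ] Lp ℝ 2 μ) (S : Set α) : Prop :=
  ∀ f : Lp ℝ 2 μ, P f =ᵐ[μ] S.indicator f

theorem norm_compression_smul {E : Type*} [SeminormedAddCommGroup E] [NormedSpace ℝ E]
    (P Q : E →L[ℝ] E) {c : ℝ} (hc : 0 ≤ c) : ‖P ∘L (c • Q) ∘L P‖ = c * ‖P ∘L Q ∘L P‖ := by
  rw [ContinuousLinearMap.smul_comp, ContinuousLinearMap.comp_smul, norm_smul,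
    Real.norm_of_nonneg hc]

theorem enorm_sq_eq_lintegral_of_ae_eq {f : Lp ℝ 2 μ} {g : α → ℝ} (hg : f =ᵐ[μ] g) :
    ‖f‖ₑ ^ 2 = ∫⁻ x, ‖g x‖ₑ ^ 2 ∂μ := by
  have h_pow := eLpNorm_nnreal_pow_eq_lintegral (f := g) (μ := μ) (p := 2) two_ne_zero
  rw [Lp.enorm_def, eLpNorm_congr_ae hg]
  simpa using h_pow

variable {S : Set α} {k : α → α → ℝ} {P Q : Lp ℝ 2 μ →L[ℝ] Lp ℝ 2 μ}

theorem enorm_compression_sq (hS : MeasurableSet S) (hQ : HasIntegralKernel Q k)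
    (hP : IsRestriction P S) (f : Lp ℝ 2 μ) :
    ‖(P ∘L Q ∘L P) f‖ₑ ^ 2 = ∫⁻ a in S, ‖∫ y in S, k a y * f y ∂μ‖ₑ ^ 2 ∂μ := by
  have inner (a : α) : ∫ y, k a y * P f y ∂μ = ∫ y in S, k a y * f y ∂μ := by
    rw [← integral_indicator hS]
    refine integral_congr_ae ?_
    filter_upwards [hP f] with y hy
    rw [hy, Set.indicator_mul_right]
  have h_coe : (P ∘L Q ∘L P) f =ᵐ[μ] S.indicator fun a => ∫ y in S, k a y * f y ∂μ := by
    filter_upwards [hP (Q (P f)), hQ (P f)] with a hPa hQa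
    simp only [ContinuousLinearMap.comp_apply, hPa, Set.indicator, hQa, inner]
  rw [enorm_sq_eq_lintegral_of_ae_eq h_coe, ← lintegral_indicator hS]
  congr with a
  by_cases ha : a ∈ S <;> simp [ha]

theorem IsL2Bound.enorm_compression_le {C : ℝ≥0∞}
    (hC : IsL2Bound (fun a y => ‖k a y‖ₑ) (μ.restrict S) C) (hS : MeasurableSet S)
    (hQ : HasIntegralKernel Q k) (hP : IsRestriction P S) : ‖P ∘L Q ∘L P‖ₑ ≤ C := by
  refine ContinuousLinearMap.opENorm_le_bound _ fun f => ?_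
  rw [← ENNReal.pow_le_pow_left_iff two_ne_zero, mul_pow]
  calc ‖(P ∘L Q ∘L P) f‖ₑ ^ 2
      = ∫⁻ a in S, ‖∫ y in S, k a y * f y ∂μ‖ₑ ^ 2 ∂μ := enorm_compression_sq hS hQ hP f
    _ ≤ ∫⁻ a in S, (∫⁻ y in S, ‖k a y‖ₑ * ‖f y‖ₑ ∂μ) ^ 2 ∂μ := by
        gcongr with a
        simpa only [enorm_mul] using enorm_integral_le_lintegral_enorm fun y => k a y * f y
    _ ≤ C ^ 2 * ∫⁻ a in S, ‖f a‖ₑ ^ 2 ∂μ := hC _ (Lp.stronglyMeasurable f).enorm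
    _ ≤ C ^ 2 * ‖f‖ₑ ^ 2 := by
        rw [enorm_sq_eq_lintegral_of_ae_eq (ae_eq_refl f)]
        gcongr
        exact Measure.restrict_le_self

theorem isL2Bound_enorm_compression [IsFiniteMeasure μ] (hS : MeasurableSet S)
    (hk : Measurable (Function.uncurry k)) (hk_nonneg : ∀ a y, 0 ≤ k a y)
    (hk_int : ∀ a, Integrable (k a) μ) (hQ : HasIntegralKernel Q k) (hP : IsRestriction P S) :
    IsL2Bound (fun a y => ‖k a y‖ₑ) (μ.restrict S) ‖P ∘L Q ∘L P‖ₑ := by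
  refine isL2Bound_of_bounded hk.enorm fun F hF ⟨n, hn⟩ => ?_
  have hF_top (a : α) : F a ≠ ∞ := ne_top_of_le_ne_top (ENNReal.natCast_ne_top n) (hn a)
  have hF_le (a : α) : ‖(F a).toReal‖ ≤ n := by
    simpa using ENNReal.toReal_mono (ENNReal.natCast_ne_top n) (hn a)
  let g : α → ℝ := S.indicator fun a => (F a).toReal
  have hg : MemLp g 2 μ :=
    (MemLp.of_bound hF.ennreal_toReal.aestronglyMeasurable n (ae_of_all _ hF_le)).indicator hS
  have h_inner (a : α) :
      ‖∫ y in S, k a y * hg.toLp g y ∂μ‖ₑ = ∫⁻ y in S, ‖k a y‖ₑ * F y ∂μ := by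
    have h_int : Integrable (fun y => k a y * (F y).toReal) (μ.restrict S) :=
      (hk_int a).integrableOn.mul_bdd hF.ennreal_toReal.aestronglyMeasurable
        (ae_of_all _ hF_le)
    have h_congr : ∫ y in S, k a y * hg.toLp g y ∂μ = ∫ y in S, ‖k a y * (F y).toReal‖ ∂μ := by
      refine setIntegral_congr_ae hS ?_
      filter_upwards [hg.coeFn_toLp] with y hy hyS
      simp [hy, g, hyS, abs_of_nonneg (hk_nonneg a y)]
    rw [h_congr, Real.enorm_of_nonneg (integral_nonneg fun _ => norm_nonneg _),
      ofReal_integral_norm_eq_lintegral_enorm h_int]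
    simp [hF_top, enorm_mul]
  calc ∫⁻ a in S, (∫⁻ y in S, ‖k a y‖ₑ * F y ∂μ) ^ 2 ∂μ
      = ‖(P ∘L Q ∘L P) (hg.toLp g)‖ₑ ^ 2 := by
        simp only [enorm_compression_sq hS hQ hP, h_inner]
    _ ≤ (‖P ∘L Q ∘L P‖ₑ * ‖hg.toLp g‖ₑ) ^ 2 := by
        gcongr
        exact ContinuousLinearMap.le_opENorm _ _
    _ = ‖P ∘L Q ∘L P‖ₑ ^ 2 * ∫⁻ a in S, F a ^ 2 ∂μ := by
        rw [mul_pow, enorm_sq_eq_lintegral_of_ae_eq hg.coeFn_toLp, ← lintegral_indicator hS]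
        congr with a
        by_cases ha : a ∈ S <;> simp [g, ha, hF_top]

end IntegralOperator

section Gaussian

variable {m : ℝ} {v : ℝ≥0}

theorem lintegral_gaussianReal (hv : v ≠ 0) {u : ℝ → ℝ≥0∞} (hu : Measurable u) :
    ∫⁻ y, u y ∂gaussianReal m v = ∫⁻ y, gaussianPDF m v y * u y := by
  rw [gaussianReal_of_var_ne_zero _ hv,
    lintegral_withDensity_eq_lintegral_mul _ (measurable_gaussianPDF _ _) hu]
  rfl

theorem setLIntegral_gaussianReal (hv : v ≠ 0) {u : ℝ → ℝ≥0∞} (hu : Measurable u)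
    {S : Set ℝ} (hS : MeasurableSet S) :
    ∫⁻ y in S, u y ∂gaussianReal m v = ∫⁻ y in S, gaussianPDF m v y * u y := by
  rw [gaussianReal_of_var_ne_zero _ hv, restrict_withDensity hS,
    lintegral_withDensity_eq_lintegral_mul _ (measurable_gaussianPDF _ _) hu]
  rfl

theorem gaussianReal_Ici_zero (hv : v ≠ 0) : gaussianReal 0 v (Set.Ici 0) = 2⁻¹ := by
  have := nullSingletonClass_gaussianReal (μ := 0) hv
  have h_symm : gaussianReal 0 v (Set.Iio 0) = gaussianReal 0 v (Set.Ici 0) := by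
    conv_lhs => rw [← neg_zero (G := ℝ), ← gaussianReal_map_neg]
    rw [Measure.map_apply measurable_neg measurableSet_Iio]
    simp [Ioi_ae_eq_Ici.measure_eq]
  have h_add := prob_add_prob_compl (μ := gaussianReal 0 v) (measurableSet_Ici (a := (0 : ℝ)))
  rw [Set.compl_Ici, h_symm, ← two_mul] at h_add
  exact ENNReal.eq_inv_of_mul_eq_one_left ((mul_comm _ _).trans h_add)

theorem strictAnti_measure_Ici (μ : Measure ℝ) [IsFiniteMeasure μ] [μ.IsOpenPosMeasure] :
    StrictAnti fun t => μ (Set.Ici t) := by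
  intro s t hst
  have h_disj : Disjoint (Set.Ico s t) (Set.Ici t) :=
    Set.disjoint_left.2 fun _ hs ht => hs.2.not_ge ht
  have h_pos : μ (Set.Ico s t) ≠ 0 :=
    ((Measure.measure_Ioo_pos μ).2 hst).trans_le (measure_mono Set.Ioo_subset_Ico_self) |>.ne'
  simp only [← Set.Ico_union_Ici_eq_Ici hst.le, measure_union h_disj measurableSet_Ici, add_comm]
  exact ENNReal.lt_add_right (measure_ne_top _ _) h_pos

theorem isOpenPosMeasure_gaussianReal (hv : v ≠ 0) : (gaussianReal m v).IsOpenPosMeasure :=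
  (gaussianReal_absolutelyContinuous' m hv).isOpenPosMeasure

theorem gaussianReal_Ici_eq (hv : v ≠ 0) (h : ℝ) :
    gaussianReal m v (Set.Ici h) = gaussianReal 0 1 (Set.Ici ((h - m) / √v)) := by
  have hv_pos : 0 < √(v : ℝ) := Real.sqrt_pos.2 (by positivity)
  have h_std : gaussianReal m v = (gaussianReal 0 1).map fun x => m + √v * x := by
    rw [← Function.comp_def (fun x => m + x), ← Measure.map_map (by fun_prop) (by fun_prop),
      gaussianReal_map_const_mul, gaussianReal_map_const_add]
    congr 1
    · simp
    · ext
      simp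
  rw [h_std, Measure.map_apply (by fun_prop) measurableSet_Ici]
  congr 1 with x
  simp [div_le_iff₀ hv_pos, mul_comm, add_comm]

end Gaussian

section Mehler

variable {ρ : ℝ} {v : ℝ≥0}

/-- The Mehler kernel: the density at `y`, with respect to `N(0, v)`, of the Ornstein–Uhlenbeck
transition law `N(ρ a, (1 - ρ²) v)`. -/
noncomputable def mehler (ρ : ℝ) (v : ℝ≥0) (a y : ℝ) : ℝ :=
  (√(1 - ρ ^ 2))⁻¹ *
    Real.exp (-(ρ ^ 2 * a ^ 2 - 2 * ρ * a * y + ρ ^ 2 * y ^ 2) / (2 * (1 - ρ ^ 2) * v))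

/-- The variance `(1 - ρ²) v` of the Ornstein–Uhlenbeck transition law, as a nonnegative real. -/
noncomputable def transitionVar (ρ : ℝ) (v : ℝ≥0) : ℝ≥0 := (1 - ρ ^ 2).toNNReal * v

theorem coe_transitionVar (hρ : ρ ^ 2 < 1) : (transitionVar ρ v : ℝ) = (1 - ρ ^ 2) * v := by
  rw [transitionVar, NNReal.coe_mul, Real.coe_toNNReal _ (sub_pos.2 hρ).le]

theorem transitionVar_ne_zero (hρ : ρ ^ 2 < 1) (hv : v ≠ 0) : transitionVar ρ v ≠ 0 :=
  mul_ne_zero (Real.toNNReal_pos.2 (sub_pos.2 hρ)).ne' hv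

theorem mehler_nonneg (a y : ℝ) : 0 ≤ mehler ρ v a y := by
  unfold mehler
  positivity

theorem measurable_uncurry_mehler : Measurable (Function.uncurry (mehler ρ v)) := by
  unfold mehler Function.uncurry
  fun_prop

theorem measurable_mehler (a : ℝ) : Measurable (mehler ρ v a) :=
  measurable_uncurry_mehler.of_uncurry_left

theorem gaussianPDFReal_mul_mehler (hρ : ρ ^ 2 < 1) (hv : v ≠ 0) (a y : ℝ) :
    gaussianPDFReal 0 v y * mehler ρ v a y =
      gaussianPDFReal (ρ * a) (transitionVar ρ v) y := by
  have hρ' : 0 < 1 - ρ ^ 2 := sub_pos.2 hρ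
  have hv' : (v : ℝ) ≠ 0 := by exact_mod_cast hv
  rw [gaussianPDFReal, gaussianPDFReal, mehler, mul_mul_mul_comm, ← Real.exp_add,
    coe_transitionVar hρ, mul_left_comm _ (1 - ρ ^ 2) (v : ℝ), Real.sqrt_mul hρ'.le, mul_inv,
    mul_comm (√_)⁻¹ (√_)⁻¹]
  congr 2
  field_simp
  ring

theorem withDensity_mehler (hρ : ρ ^ 2 < 1) (hv : v ≠ 0) (a : ℝ) :
    (gaussianReal 0 v).withDensity (fun y => ‖mehler ρ v a y‖ₑ) =
      gaussianReal (ρ * a) (transitionVar ρ v) := by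
  rw [gaussianReal_of_var_ne_zero _ hv,
    gaussianReal_of_var_ne_zero _ (transitionVar_ne_zero hρ hv),
    ← withDensity_mul _ (measurable_gaussianPDF _ _) (measurable_mehler a).enorm]
  congr with y
  rw [Pi.mul_apply, gaussianPDF, gaussianPDF, Real.enorm_of_nonneg (mehler_nonneg a y),
    ← ENNReal.ofReal_mul (gaussianPDFReal_nonneg _ _ _), gaussianPDFReal_mul_mehler hρ hv]

theorem setLIntegral_mehler (hρ : ρ ^ 2 < 1) (hv : v ≠ 0) (a : ℝ) (S : Set ℝ) :
    ∫⁻ y in S, ‖mehler ρ v a y‖ₑ ∂gaussianReal 0 v =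
      gaussianReal (ρ * a) (transitionVar ρ v) S := by
  rw [← withDensity_mehler hρ hv, withDensity_apply']

theorem integrable_mehler (hρ : ρ ^ 2 < 1) (hv : v ≠ 0) (a : ℝ) :
    Integrable (mehler ρ v a) (gaussianReal 0 v) := by
  refine ⟨(measurable_mehler a).aestronglyMeasurable, ?_⟩
  rw [HasFiniteIntegral, ← setLIntegral_univ, setLIntegral_mehler hρ hv, measure_univ]
  exact ENNReal.one_lt_top

theorem gaussianReal_map_ornsteinUhlenbeck (hρ : ρ ^ 2 < 1) (a : ℝ) :
    (gaussianReal 0 v).map (fun y => ρ * a + √(1 - ρ ^ 2) * y) =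
      gaussianReal (ρ * a) (transitionVar ρ v) := by
  rw [← Function.comp_def (fun y => ρ * a + y), ← Measure.map_map (by fun_prop) (by fun_prop),
    gaussianReal_map_const_mul, gaussianReal_map_const_add, mul_zero, zero_add]
  congr 1
  ext
  simp [coe_transitionVar hρ, Real.sq_sqrt (sub_pos.2 hρ).le]

theorem integral_ornsteinUhlenbeck_eq_integral_mehler (hρ : ρ ^ 2 < 1) (hv : v ≠ 0) {f : ℝ → ℝ}
    (hf : StronglyMeasurable f) (a : ℝ) :
    ∫ y, f (ρ * a + √(1 - ρ ^ 2) * y) ∂gaussianReal 0 v =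
      ∫ y, mehler ρ v a y * f y ∂gaussianReal 0 v := by
  rw [← integral_map (φ := fun y => ρ * a + √(1 - ρ ^ 2) * y) (by fun_prop)
    hf.aestronglyMeasurable, gaussianReal_map_ornsteinUhlenbeck hρ,
    integral_gaussianReal_eq_integral_smul (transitionVar_ne_zero hρ hv),
    integral_gaussianReal_eq_integral_smul hv]
  simp only [smul_eq_mul, ← mul_assoc, gaussianPDFReal_mul_mehler hρ hv]

theorem gaussianPDFReal_mul_mehler_sq (hρ : ρ ^ 2 < 1) (hv : v ≠ 0) {t : ℝ≥0}
    (ht : (t : ℝ) = (1 + ρ ^ 2) / (1 - ρ ^ 2)) (a y : ℝ) :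
    gaussianPDFReal 0 v a * (gaussianPDFReal 0 v y * mehler ρ v a y ^ 2) =
      (1 - ρ ^ 2)⁻¹ * (gaussianPDFReal 0 (t * v) a *
        gaussianPDFReal (2 * ρ / (1 + ρ ^ 2) * a) (t⁻¹ * v) y) := by
  have hρ' : 0 < 1 - ρ ^ 2 := sub_pos.2 hρ
  have ht' : (0 : ℝ) < t := ht ▸ by positivity
  simp only [gaussianPDFReal, mehler, NNReal.coe_mul, NNReal.coe_inv, mul_pow, inv_pow,
    Real.sq_sqrt hρ'.le, ← Real.exp_nat_mul]
  have h_sqrt : (√(2 * Real.pi * (t * v)))⁻¹ * (√(2 * Real.pi * ((t : ℝ)⁻¹ * v)))⁻¹ =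
      (√(2 * Real.pi * v))⁻¹ * (√(2 * Real.pi * v))⁻¹ := by
    rw [← mul_inv, ← mul_inv, ← Real.sqrt_mul (by positivity), ← Real.sqrt_mul (by positivity)]
    congr 2
    field_simp
  have h_exp : Real.exp (-(a - 0) ^ 2 / (2 * v)) * (Real.exp (-(y - 0) ^ 2 / (2 * v)) *
      Real.exp ((2 : ℕ) * (-(ρ ^ 2 * a ^ 2 - 2 * ρ * a * y + ρ ^ 2 * y ^ 2) /
        (2 * (1 - ρ ^ 2) * v)))) =
      Real.exp (-(a - 0) ^ 2 / (2 * (t * v))) *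
        Real.exp (-(y - 2 * ρ / (1 + ρ ^ 2) * a) ^ 2 / (2 * ((t : ℝ)⁻¹ * v))) := by
    rw [← Real.exp_add, ← Real.exp_add, ← Real.exp_add, ht]
    congr 1
    field_simp
    push_cast
    ring
  linear_combination (1 - ρ ^ 2)⁻¹ * ((√(2 * Real.pi * v))⁻¹ * (√(2 * Real.pi * v))⁻¹) * h_exp -
    (1 - ρ ^ 2)⁻¹ * (Real.exp (-(a - 0) ^ 2 / (2 * (t * v))) *
        Real.exp (-(y - 2 * ρ / (1 + ρ ^ 2) * a) ^ 2 / (2 * ((t : ℝ)⁻¹ * v)))) * h_sqrt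

theorem gaussianPDF_mul_lintegral_mehler_sq (hρ : ρ ^ 2 < 1) (hv : v ≠ 0) {t : ℝ≥0}
    (ht : (t : ℝ) = (1 + ρ ^ 2) / (1 - ρ ^ 2)) (a : ℝ) :
    gaussianPDF 0 v a * ∫⁻ y, ‖mehler ρ v a y‖ₑ ^ 2 ∂gaussianReal 0 v =
      ENNReal.ofReal (1 - ρ ^ 2)⁻¹ * gaussianPDF 0 (t * v) a := by
  have ht_ne : t ≠ 0 := by
    rw [← NNReal.coe_ne_zero, ht]
    have := sub_pos.2 hρ
    positivity
  have h_pdf (y : ℝ) : gaussianPDF 0 v a * (gaussianPDF 0 v y * ‖mehler ρ v a y‖ₑ ^ 2) =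
      ENNReal.ofReal (1 - ρ ^ 2)⁻¹ * gaussianPDF 0 (t * v) a *
        gaussianPDF (2 * ρ / (1 + ρ ^ 2) * a) (t⁻¹ * v) y := by
    rw [mul_assoc]
    simp only [gaussianPDF, Real.enorm_of_nonneg (mehler_nonneg a y),
      ← ENNReal.ofReal_pow (mehler_nonneg a y),
      ← ENNReal.ofReal_mul (gaussianPDFReal_nonneg _ _ _),
      ← ENNReal.ofReal_mul (inv_nonneg.2 (sub_pos.2 hρ).le),
      gaussianPDFReal_mul_mehler_sq hρ hv ht]
  rw [lintegral_gaussianReal hv ((measurable_mehler a).enorm.pow_const 2),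
    ← lintegral_const_mul' _ _ gaussianPDF_ne_top]
  simp only [h_pdf]
  rw [lintegral_const_mul _ (measurable_gaussianPDF _ _),
    lintegral_gaussianPDF_eq_one _ (by positivity), mul_one]

theorem setLIntegral_Ici_lintegral_mehler_sq (hρ : ρ ^ 2 < 1) (hv : v ≠ 0) :
    ∫⁻ a in Set.Ici 0, ∫⁻ y, ‖mehler ρ v a y‖ₑ ^ 2 ∂gaussianReal 0 v ∂gaussianReal 0 v =
      ENNReal.ofReal (2 * (1 - ρ ^ 2))⁻¹ := by
  have : 0 < 1 - ρ ^ 2 := sub_pos.2 hρ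
  let t : ℝ≥0 := ((1 + ρ ^ 2) / (1 - ρ ^ 2)).toNNReal
  have ht : (t : ℝ) = (1 + ρ ^ 2) / (1 - ρ ^ 2) := Real.coe_toNNReal _ (by positivity)
  have ht_ne : t ≠ 0 := by
    rw [← NNReal.coe_ne_zero, ht]
    positivity
  have h_meas : Measurable fun a => ∫⁻ y, ‖mehler ρ v a y‖ₑ ^ 2 ∂gaussianReal 0 v :=
    (measurable_uncurry_mehler.enorm.pow_const 2).lintegral_prod_right'
  rw [setLIntegral_gaussianReal hv h_meas measurableSet_Ici]
  simp only [gaussianPDF_mul_lintegral_mehler_sq hρ hv ht]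
  rw [lintegral_const_mul _ (measurable_gaussianPDF _ _),
    ← gaussianReal_apply _ (mul_ne_zero ht_ne hv), gaussianReal_Ici_zero (mul_ne_zero ht_ne hv),
    mul_inv, mul_comm, ENNReal.ofReal_mul (by norm_num), ENNReal.ofReal_inv_of_pos two_pos,
    ENNReal.ofReal_ofNat]

theorem isL2Bound_mehler_Ici_zero (hρ : ρ ^ 2 < 1) (hv : v ≠ 0) :
    IsL2Bound (fun a y => ‖mehler ρ v a y‖ₑ) ((gaussianReal 0 v).restrict (Set.Ici 0))
      (ENNReal.ofReal √(2 * (1 - ρ ^ 2))⁻¹) := by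
  refine isL2Bound_of_lintegral_lintegral_sq_le measurable_uncurry_mehler.enorm ?_
  rw [← ENNReal.ofReal_pow (Real.sqrt_nonneg _),
    Real.sq_sqrt (by simpa using hρ.le),
    ← setLIntegral_Ici_lintegral_mehler_sq hρ hv]
  gcongr with a
  exact Measure.restrict_le_self

theorem gaussianReal_Ici_lt_of_isL2Bound_mehler (hρ_pos : 0 < ρ) (hρ : ρ ^ 2 < 1) (hv : v ≠ 0)
    {h : ℝ} {C : ℝ≥0∞} (hC : IsL2Bound (fun a y => ‖mehler ρ v a y‖ₑ)
      ((gaussianReal 0 v).restrict (Set.Ici h)) C) :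
    gaussianReal (ρ * h) (transitionVar ρ v) (Set.Ici h) < C := by
  have hτ := transitionVar_ne_zero hρ hv
  have := isOpenPosMeasure_gaussianReal (m := 0) hv
  have := isOpenPosMeasure_gaussianReal (m := 0) one_ne_zero
  have := nullSingletonClass_gaussianReal (μ := 0) hv
  have : NeZero ((gaussianReal 0 v).restrict (Set.Ici h)) :=
    ⟨mt Measure.restrict_eq_zero.1 <| ((Measure.measure_Ioi_pos _ h).trans_le
      (measure_mono Set.Ioi_subset_Ici_self)).ne'⟩
  refine hC.lt_of_ae_lt_lintegral measurable_uncurry_mehler.enorm ?_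
  rw [← restrict_Ioi_eq_restrict_Ici]
  filter_upwards [ae_restrict_mem measurableSet_Ioi] with a (ha : h < a)
  rw [restrict_Ioi_eq_restrict_Ici, setLIntegral_mehler hρ hv, gaussianReal_Ici_eq hτ,
    gaussianReal_Ici_eq hτ]
  refine strictAnti_measure_Ici _ ?_
  gcongr

/-- The square root of the density of `N(-h, v)` with respect to `N(0, v)`. -/
noncomputable def shiftWeight (v : ℝ≥0) (h a : ℝ) : ℝ :=
  Real.exp (-(2 * h * a + h ^ 2) / (4 * v))

theorem shiftWeight_nonneg (h a : ℝ) : 0 ≤ shiftWeight v h a := Real.exp_nonneg _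

theorem measurable_shiftWeight (h : ℝ) : Measurable (shiftWeight v h) := by
  unfold shiftWeight
  fun_prop

theorem gaussianPDFReal_add_eq_shiftWeight (hv : v ≠ 0) (h a : ℝ) :
    gaussianPDFReal 0 v (a + h) = gaussianPDFReal 0 v a * shiftWeight v h a ^ 2 := by
  rw [gaussianPDFReal, gaussianPDFReal, shiftWeight, ← Real.exp_nat_mul,
    mul_assoc _ (Real.exp _) (Real.exp _), ← Real.exp_add]
  congr 2
  field_simp
  push_cast
  ring

theorem setLIntegral_Ici_gaussianReal (hv : v ≠ 0) {u : ℝ → ℝ≥0∞} (hu : Measurable u) (h : ℝ) :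
    ∫⁻ a in Set.Ici h, u a ∂gaussianReal 0 v =
      ∫⁻ a in Set.Ici 0, ‖shiftWeight v h a‖ₑ ^ 2 * u (a + h) ∂gaussianReal 0 v := by
  have h_pdf (a : ℝ) : gaussianPDF 0 v (a + h) =
      gaussianPDF 0 v a * ‖shiftWeight v h a‖ₑ ^ 2 := by
    rw [gaussianPDF, gaussianPDF, gaussianPDFReal_add_eq_shiftWeight hv,
      ENNReal.ofReal_mul (gaussianPDFReal_nonneg _ _ _),
      ENNReal.ofReal_pow (shiftWeight_nonneg _ _),
      Real.enorm_of_nonneg (shiftWeight_nonneg _ _)]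
  have h_meas : Measurable fun a => ‖shiftWeight v h a‖ₑ ^ 2 * u (a + h) :=
    ((measurable_shiftWeight h).enorm.pow_const 2).mul (hu.comp (measurable_add_const h))
  rw [setLIntegral_gaussianReal hv hu measurableSet_Ici,
    setLIntegral_gaussianReal hv h_meas measurableSet_Ici,
    ← lintegral_indicator measurableSet_Ici, ← lintegral_indicator measurableSet_Ici,
    ← lintegral_add_right_eq_self _ h]
  congr with a
  by_cases ha : 0 ≤ a <;> simp [ha, h_pdf, mul_assoc]

theorem shiftWeight_mul_mehler_add (hρ : ρ ^ 2 < 1) (hv : v ≠ 0) (h a y : ℝ) :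
    shiftWeight v h a * mehler ρ v (a + h) (y + h) * shiftWeight v h y =
      Real.exp (-((1 - ρ) * (h ^ 2 + h * (a + y))) / (2 * (1 + ρ) * v)) * mehler ρ v a y := by
  have hρ_abs : |ρ| < 1 := (sq_lt_one_iff_abs_lt_one ρ).1 hρ
  have h_sub : 1 - ρ ≠ 0 := (sub_pos.2 (abs_lt.1 hρ_abs).2).ne'
  have h_add : 1 + ρ ≠ 0 := by linarith [(abs_lt.1 hρ_abs).1]
  have h_mul : 1 - ρ ^ 2 = (1 - ρ) * (1 + ρ) := by ring
  simp only [mehler, shiftWeight, mul_left_comm _ (√_)⁻¹, mul_assoc, ← Real.exp_add]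
  congr 2
  rw [h_mul]
  field_simp
  ring

theorem shiftWeight_mul_mehler_add_le (hρ : ρ ^ 2 < 1) (hv : v ≠ 0) {h a y : ℝ} (hh : 0 ≤ h)
    (ha : 0 ≤ a) (hy : 0 ≤ y) :
    shiftWeight v h a * mehler ρ v (a + h) (y + h) * shiftWeight v h y ≤
      Real.exp (-((1 - ρ) * h ^ 2) / (2 * (1 + ρ) * v)) * mehler ρ v a y := by
  have hρ_abs := abs_lt.1 ((sq_lt_one_iff_abs_lt_one ρ).1 hρ)
  have h_sub : 0 ≤ 1 - ρ := by linarith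
  have h_add : 0 ≤ 1 + ρ := by linarith
  rw [shiftWeight_mul_mehler_add hρ hv]
  gcongr ?_ * _
  · exact mehler_nonneg a y
  · gcongr
    exact le_add_of_nonneg_right (by positivity)

theorem isL2Bound_mehler_Ici (hρ : ρ ^ 2 < 1) (hv : v ≠ 0) {h : ℝ} (hh : 0 ≤ h) {C : ℝ≥0∞}
    (hC : IsL2Bound (fun a y => ‖mehler ρ v a y‖ₑ) ((gaussianReal 0 v).restrict (Set.Ici 0)) C) :
    IsL2Bound (fun a y => ‖mehler ρ v a y‖ₑ) ((gaussianReal 0 v).restrict (Set.Ici h))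
      (ENNReal.ofReal (Real.exp (-((1 - ρ) * h ^ 2) / (2 * (1 + ρ) * v))) * C) := by
  refine hC.of_changeOfVariables measurable_uncurry_mehler.enorm (measurable_add_const h)
    (measurable_shiftWeight h).enorm (fun u hu => setLIntegral_Ici_gaussianReal hv hu h)
    ENNReal.ofReal_ne_top ?_
  filter_upwards [ae_restrict_mem measurableSet_Ici] with a ha
  filter_upwards [ae_restrict_mem measurableSet_Ici] with y hy
  rw [← Real.enorm_of_nonneg (Real.exp_nonneg _), ← enorm_mul, ← enorm_mul, ← enorm_mul,
    Real.enorm_of_nonneg (mul_nonneg (Real.exp_nonneg _) (mehler_nonneg a y)),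
    Real.enorm_of_nonneg (mul_nonneg (mul_nonneg (shiftWeight_nonneg h a) (mehler_nonneg _ _))
      (shiftWeight_nonneg h y))]
  exact ENNReal.ofReal_le_ofReal (shiftWeight_mul_mehler_add_le hρ hv hh ha hy)

end Mehler

section MehlerCompression

variable {ρ : ℝ} {v : ℝ≥0} {h : ℝ}
  {Q P P₀ : Lp ℝ 2 (gaussianReal 0 v) →L[ℝ] Lp ℝ 2 (gaussianReal 0 v)}

theorem hasIntegralKernel_mehler (hρ : ρ ^ 2 < 1) (hv : v ≠ 0)
    (hQ : ∀ f, Q f =ᵐ[gaussianReal 0 v] fun a =>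
      ∫ y, f (ρ * a + √(1 - ρ ^ 2) * y) ∂gaussianReal 0 v) :
    HasIntegralKernel Q (mehler ρ v) := fun f => (hQ f).trans <| .of_eq <| funext
  fun a => integral_ornsteinUhlenbeck_eq_integral_mehler hρ hv (Lp.stronglyMeasurable f) a

theorem isL2Bound_mehler_enorm_compression (hρ : ρ ^ 2 < 1) (hv : v ≠ 0) {S : Set ℝ}
    (hS : MeasurableSet S) (hQ : HasIntegralKernel Q (mehler ρ v)) (hP : IsRestriction P S) :
    IsL2Bound (fun a y => ‖mehler ρ v a y‖ₑ) ((gaussianReal 0 v).restrict S)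
      ‖P ∘L Q ∘L P‖ₑ :=
  isL2Bound_enorm_compression hS measurable_uncurry_mehler mehler_nonneg
    (integrable_mehler hρ hv) hQ hP

theorem norm_mehler_compression_Ici_zero_le (hρ : ρ ^ 2 < 1) (hv : v ≠ 0)
    (hQ : HasIntegralKernel Q (mehler ρ v)) (hP₀ : IsRestriction P₀ (Set.Ici 0)) :
    ‖P₀ ∘L Q ∘L P₀‖ ≤ √(2 * (1 - ρ ^ 2))⁻¹ := by
  have h_le := (isL2Bound_mehler_Ici_zero hρ hv).enorm_compression_le measurableSet_Ici hQ hP₀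
  rwa [← ofReal_norm, ENNReal.ofReal_le_ofReal_iff (Real.sqrt_nonneg _)] at h_le

theorem gaussianReal_real_Ici_lt_norm_mehler_compression (hρ_pos : 0 < ρ) (hρ : ρ ^ 2 < 1)
    (hv : v ≠ 0) (hQ : HasIntegralKernel Q (mehler ρ v)) (hP : IsRestriction P (Set.Ici h)) :
    (gaussianReal 0 1).real (Set.Ici ((h - ρ * h) / √((1 - ρ ^ 2) * v))) <
      ‖P ∘L Q ∘L P‖ := by
  have h_lt := gaussianReal_Ici_lt_of_isL2Bound_mehler hρ_pos hρ hv
    (isL2Bound_mehler_enorm_compression hρ hv measurableSet_Ici hQ hP)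
  rw [gaussianReal_Ici_eq (transitionVar_ne_zero hρ hv), coe_transitionVar hρ] at h_lt
  rw [← toReal_enorm]
  exact ENNReal.toReal_strict_mono enorm_ne_top h_lt

theorem norm_mehler_compression_Ici_le (hρ : ρ ^ 2 < 1) (hv : v ≠ 0) (hh : 0 ≤ h)
    (hQ : HasIntegralKernel Q (mehler ρ v)) (hP₀ : IsRestriction P₀ (Set.Ici 0))
    (hP : IsRestriction P (Set.Ici h)) :
    ‖P ∘L Q ∘L P‖ ≤
      Real.exp (-((1 - ρ) * h ^ 2) / (2 * (1 + ρ) * v)) * ‖P₀ ∘L Q ∘L P₀‖ := by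
  have h_le := (isL2Bound_mehler_Ici hρ hv hh
    (isL2Bound_mehler_enorm_compression hρ hv measurableSet_Ici hQ hP₀)).enorm_compression_le
      measurableSet_Ici hQ hP
  rwa [← ofReal_norm, ← ofReal_norm, ← ENNReal.ofReal_mul (Real.exp_nonneg _),
    ENNReal.ofReal_le_ofReal_iff (by positivity)] at h_le

theorem isRestriction_Ici (hP : ∀ f, P f =ᵐ[gaussianReal 0 v] fun a => if h ≤ a then f a else 0) :
    IsRestriction P (Set.Ici h) := fun f => (hP f).trans <| .of_eq <| by
  ext a
  simp [Set.indicator]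

end MehlerCompression

section FreeField

variable {d h : ℝ}

/-- The variance `d / (d² - 1)` of the Gaussian free field at a vertex of the `(d + 1)`-regular
tree. -/
noncomputable def freeFieldVar (d : ℝ) : ℝ≥0 := (d / (d ^ 2 - 1)).toNNReal

theorem coe_freeFieldVar (hd : 1 < d) : (freeFieldVar d : ℝ) = d / (d ^ 2 - 1) :=
  Real.coe_toNNReal _ (div_nonneg (by positivity) (by nlinarith))

theorem freeFieldVar_ne_zero (hd : 1 < d) : freeFieldVar d ≠ 0 :=
  (Real.toNNReal_pos.2 (div_pos (by positivity) (by nlinarith))).ne'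

theorem inv_sq_lt_one (hd : 1 < d) : d⁻¹ ^ 2 < 1 :=
  pow_lt_one₀ (by positivity) (inv_lt_one_of_one_lt₀ hd) two_ne_zero

variable {Q P P₀ : Lp ℝ 2 (gaussianReal 0 (freeFieldVar d)) →L[ℝ]
  Lp ℝ 2 (gaussianReal 0 (freeFieldVar d))}

theorem norm_smul_compression_Ici_zero_lt (hd : 2 < d ^ 2) (hd_pos : 0 < d)
    (hQ : HasIntegralKernel Q (mehler d⁻¹ (freeFieldVar d)))
    (hP₀ : IsRestriction P₀ (Set.Ici 0)) : ‖P₀ ∘L (d • Q) ∘L P₀‖ < d := by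
  have hd_one : 1 < d := by nlinarith
  have h_sq : d⁻¹ ^ 2 < 2⁻¹ := by
    rw [inv_pow]
    exact inv_strictAnti₀ two_pos hd
  have h_lt : √(2 * (1 - d⁻¹ ^ 2))⁻¹ < 1 := by
    rw [Real.sqrt_lt' one_pos, one_pow]
    exact inv_lt_one_of_one_lt₀ (by linarith)
  rw [norm_compression_smul _ _ hd_pos.le]
  exact mul_lt_of_lt_one_right hd_pos <|
    (norm_mehler_compression_Ici_zero_le (inv_sq_lt_one hd_one) (freeFieldVar_ne_zero hd_one)
      hQ hP₀).trans_lt h_lt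

theorem mul_gaussianReal_real_Ici_lt_norm_smul_compression (hd : 1 < d)
    (hQ : HasIntegralKernel Q (mehler d⁻¹ (freeFieldVar d))) (hP : IsRestriction P (Set.Ici h)) :
    d * (gaussianReal 0 1).real (Set.Ici (h * (d - 1) / √d)) < ‖P ∘L (d • Q) ∘L P‖ := by
  have hd_pos : 0 < d := one_pos.trans hd
  have h_var : (1 - d⁻¹ ^ 2) * freeFieldVar d = d⁻¹ := by
    have : d ^ 2 - 1 ≠ 0 := by nlinarith
    rw [coe_freeFieldVar hd]
    field_simp
  have h_level : (h - d⁻¹ * h) / √d⁻¹ = h * (d - 1) / √d := by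
    rw [Real.sqrt_inv, div_inv_eq_mul, eq_div_iff (by positivity), mul_assoc,
      Real.mul_self_sqrt hd_pos.le]
    field_simp
  have h_lt := gaussianReal_real_Ici_lt_norm_mehler_compression (inv_pos.2 hd_pos)
    (inv_sq_lt_one hd) (freeFieldVar_ne_zero hd) hQ hP
  rw [h_var, h_level] at h_lt
  rw [norm_compression_smul _ _ hd_pos.le]
  gcongr

theorem norm_smul_compression_Ici_le (hd : 1 < d) (hh : 0 ≤ h)
    (hQ : HasIntegralKernel Q (mehler d⁻¹ (freeFieldVar d)))
    (hP₀ : IsRestriction P₀ (Set.Ici 0)) (hP : IsRestriction P (Set.Ici h)) :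
    ‖P ∘L (d • Q) ∘L P‖ ≤
      ‖P₀ ∘L (d • Q) ∘L P₀‖ * Real.exp (-(h ^ 2 * (d - 1) ^ 2) / (2 * d)) := by
  have h_exp : -((1 - d⁻¹) * h ^ 2) / (2 * (1 + d⁻¹) * freeFieldVar d) =
      -(h ^ 2 * (d - 1) ^ 2) / (2 * d) := by
    have : d ^ 2 - 1 ≠ 0 := by nlinarith
    have : d + 1 ≠ 0 := by positivity
    rw [coe_freeFieldVar hd]
    field_simp
    ring
  have h_le := norm_mehler_compression_Ici_le (inv_sq_lt_one hd) (freeFieldVar_ne_zero hd)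
    hh hQ hP₀ hP
  rw [h_exp] at h_le
  have hd_nonneg : 0 ≤ d := by linarith
  rw [norm_compression_smul _ _ hd_nonneg, norm_compression_smul _ _ hd_nonneg, mul_assoc,
    mul_comm ‖P₀ ∘L Q ∘L P₀‖]
  gcongr

end FreeField

section CriticalLevels

theorem inv_sqrt_mul_integral_Ioi_eq_gaussianReal (t : ℝ) :
    (√(2 * Real.pi))⁻¹ * ∫ x in Set.Ioi t, Real.exp (-x ^ 2 / 2) =
      (gaussianReal 0 1).real (Set.Ici t) := by
  rw [Measure.real, gaussianReal_apply_eq_integral _ one_ne_zero, ENNReal.toReal_ofReal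
    (integral_nonneg fun x => gaussianPDFReal_nonneg _ _ _), integral_Ici_eq_integral_Ioi,
    ← integral_const_mul]
  simp [gaussianPDFReal]

theorem strictAnti_gaussianReal_real_Ici :
    StrictAnti fun t => (gaussianReal 0 1).real (Set.Ici t) := fun _ _ hst =>
  have := isOpenPosMeasure_gaussianReal (m := 0) one_ne_zero
  ENNReal.toReal_strict_mono (measure_ne_top _ _) (strictAnti_measure_Ici _ hst)

theorem strictAnti_mul_gaussianReal_real_Ici {d : ℝ} (hd : 1 < d) :
    StrictAnti fun h => d * (gaussianReal 0 1).real (Set.Ici (h * (d - 1) / √d)) := by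
  intro s t hst
  have := sub_pos.2 hd
  refine mul_lt_mul_of_pos_left (strictAnti_gaussianReal_real_Ici ?_) (one_pos.trans hd)
  gcongr

theorem nonneg_of_mul_gaussianReal_real_Ici_eq_one {d h : ℝ} (hd : 2 ≤ d)
    (hh : d * (gaussianReal 0 1).real (Set.Ici (h * (d - 1) / √d)) = 1) : 0 ≤ h := by
  rw [← (strictAnti_mul_gaussianReal_real_Ici (one_lt_two.trans_le hd)).le_iff_ge]
  rw [hh, zero_mul, zero_div, measureReal_def, gaussianReal_Ici_zero one_ne_zero,
    ENNReal.toReal_inv, ENNReal.toReal_ofNat]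
  linarith

theorem strictAnti_mul_exp_neg_mul_div {a k m : ℝ} (ha : 0 < a) (hk : 0 < k) (hm : 0 < m) :
    StrictAnti fun s => a * Real.exp (-(s * k) / m) := by
  intro s t hst
  dsimp only
  gcongr

theorem le_of_mul_exp_eq_one {a k m s t : ℝ} (hk : 0 < k) (hm : 0 < m)
    (hs : 1 ≤ a * Real.exp (-(s * k) / m)) (ht : a * Real.exp (-(t * k) / m) = 1) : s ≤ t := by
  have ha : 0 < a := pos_of_mul_pos_left (ht ▸ one_pos) (Real.exp_nonneg _)
  exact (strictAnti_mul_exp_neg_mul_div ha hk hm).le_iff_ge.1 (ht.trans_le hs)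

theorem lt_of_mul_exp_eq_one {a b k m s t : ℝ} (hab : a < b) (hk : 0 < k) (hm : 0 < m)
    (hs : a * Real.exp (-(s * k) / m) = 1) (ht : b * Real.exp (-(t * k) / m) = 1) : s < t := by
  have hb : 0 < b := pos_of_mul_pos_left (ht ▸ one_pos) (Real.exp_nonneg _)
  rw [← (strictAnti_mul_exp_neg_mul_div hb hk hm).lt_iff_gt, ht, ← hs]
  gcongr

end CriticalLevels

theorem stmt_19_general {d : ℝ} (hd : 2 ≤ d)
    {ν : Measure ℝ} (hν : ν = gaussianReal 0 (Real.toNNReal (d / (d ^ 2 - 1))))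
    {Q : Lp ℝ 2 ν →L[ℝ] Lp ℝ 2 ν}
    (hQ : ∀ f : Lp ℝ 2 ν, Q f =ᵐ[ν] fun a => ∫ y, f (a / d + √(1 - 1 / d ^ 2) * y) ∂ν)
    {Ph : ℝ → (Lp ℝ 2 ν →L[ℝ] Lp ℝ 2 ν)}
    (hPh : ∀ (h : ℝ) (f : Lp ℝ 2 ν), Ph h f =ᵐ[ν] fun a => if h ≤ a then f a else 0)
    {lam : ℝ → ℝ} (hlam : ∀ h : ℝ, lam h = ‖Ph h ∘L (d • Q) ∘L Ph h‖)
    {Phibar : ℝ → ℝ}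
    (hPhibar : ∀ a : ℝ, Phibar a =
      (√(2 * Real.pi))⁻¹ * ∫ t in Set.Ioi a, Real.exp (-t ^ 2 / 2))
    {hstar : ℝ} (hstar_eq : lam hstar = 1)
    {hΔ : ℝ} (hΔ_eq : d * Phibar (hΔ * (d - 1) / √d) = 1)
    {hbox : ℝ} (hbox_nn : 0 ≤ hbox)
    (hbox_eq : lam 0 * Real.exp (-(hbox ^ 2 * (d - 1) ^ 2) / (2 * d)) = 1)
    {ustar : ℝ} (hustar : d * Real.exp (-(ustar * (d - 1) ^ 2) / d) = 1) :
    0 ≤ hΔ ∧ hΔ < hstar ∧ hstar ≤ hbox ∧ hbox < √(2 * ustar) ∧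
      0 < hstar ∧ hstar < √(2 * ustar) := by
  obtain rfl : ν = gaussianReal 0 (freeFieldVar d) := hν
  have hd_one : 1 < d := one_lt_two.trans_le hd
  have hd_pos : 0 < d := one_pos.trans hd_one
  have h_sq_pos : 0 < (d - 1) ^ 2 := pow_pos (sub_pos.2 hd_one) 2
  have hP (h : ℝ) : IsRestriction (Ph h) (Set.Ici h) := isRestriction_Ici (hPh h)
  have hK : HasIntegralKernel Q (mehler d⁻¹ (freeFieldVar d)) :=
    hasIntegralKernel_mehler (inv_sq_lt_one hd_one) (freeFieldVar_ne_zero hd_one) <| by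
      simpa only [inv_pow, one_div, div_eq_inv_mul, mul_one] using hQ
  rw [hPhibar, inv_sqrt_mul_integral_Ioi_eq_gaussianReal] at hΔ_eq
  have hΔ_nonneg : 0 ≤ hΔ := nonneg_of_mul_gaussianReal_real_Ici_eq_one hd hΔ_eq
  have hΔ_lt : hΔ < hstar := by
    have h_tail := mul_gaussianReal_real_Ici_lt_norm_smul_compression hd_one hK (hP hstar)
    rw [← hlam, hstar_eq] at h_tail
    exact (strictAnti_mul_gaussianReal_real_Ici hd_one).lt_iff_gt.1 (h_tail.trans_eq hΔ_eq.symm)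
  have hstar_pos : 0 < hstar := hΔ_nonneg.trans_lt hΔ_lt
  have hstar_le : hstar ≤ hbox := by
    have h_exp := norm_smul_compression_Ici_le hd_one hstar_pos.le hK (hP 0) (hP hstar)
    rw [← hlam, ← hlam, hstar_eq] at h_exp
    exact le_of_sq_le_sq (le_of_mul_exp_eq_one h_sq_pos (by positivity) h_exp hbox_eq) hbox_nn
  have hbox_lt : hbox < √(2 * ustar) := by
    have h_zero := norm_smul_compression_Ici_zero_lt (by nlinarith) hd_pos hK (hP 0)
    rw [← hlam] at h_zero
    rw [← mul_div_mul_left _ _ two_ne_zero, mul_neg, ← mul_assoc] at hustar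
    exact Real.lt_sqrt_of_sq_lt
      (lt_of_mul_exp_eq_one h_zero h_sq_pos (by positivity) hbox_eq hustar)
  exact ⟨hΔ_nonneg, hΔ_lt, hstar_le, hbox_lt, hstar_pos, hstar_le.trans_lt hbox_lt⟩

/-- For d ≥ 2, with h_* the critical level for level-set percolation
of the Gaussian free field on the (d+1)-regular tree (λ_{h_*} = 1), u_* the
critical level for vacant-set percolation of random interlacements
(d·exp(-u_*(d-1)²/d) = 1), and h_Δ, h_□ defined by d·Φ̄(h_Δ(d-1)/√d) = 1 and
λ_0·exp(-h_□²(d-1)²/(2d)) = 1, one has 0 ≤ h_Δ < h_* ≤ h_□ < √(2u_*); in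
particular 0 < h_* < √(2u_*). -/
theorem stmt_19 (d : ℕ) (hd : 2 ≤ d)
    (ν : Measure ℝ) (hν : ν = gaussianReal 0 (Real.toNNReal ((d : ℝ) / ((d : ℝ) ^ 2 - 1))))
    (Q : Lp ℝ 2 ν →L[ℝ] Lp ℝ 2 ν)
    (hQ : ∀ f : Lp ℝ 2 ν, (Q f : ℝ → ℝ) =ᵐ[ν]
      fun a => ∫ y, (f : ℝ → ℝ) (a / d + Real.sqrt (1 - 1 / (d : ℝ) ^ 2) * y) ∂ν)
    (Ph : ℝ → (Lp ℝ 2 ν →L[ℝ] Lp ℝ 2 ν))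
    (hPh : ∀ (h : ℝ) (f : Lp ℝ 2 ν), (Ph h f : ℝ → ℝ) =ᵐ[ν]
      fun a => if h ≤ a then (f : ℝ → ℝ) a else 0)
    (lam : ℝ → ℝ) (hlam : ∀ h : ℝ, lam h = ‖Ph h ∘L ((d : ℝ) • Q) ∘L Ph h‖)
    (Phibar : ℝ → ℝ)
    (hPhibar : ∀ a : ℝ, Phibar a =
      (Real.sqrt (2 * Real.pi))⁻¹ * ∫ t in Set.Ioi a, Real.exp (-t ^ 2 / 2))
    (hstar : ℝ) (hstar_eq : lam hstar = 1)
    (hΔ : ℝ) (hΔ_eq : (d : ℝ) * Phibar (hΔ * ((d : ℝ) - 1) / Real.sqrt d) = 1)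
    (hbox : ℝ) (hbox_nn : 0 ≤ hbox)
    (hbox_eq : lam 0 * Real.exp (-(hbox ^ 2 * ((d : ℝ) - 1) ^ 2) / (2 * d)) = 1)
    (ustar : ℝ) (hustar : (d : ℝ) * Real.exp (-(ustar * ((d : ℝ) - 1) ^ 2) / d) = 1) :
    0 ≤ hΔ ∧ hΔ < hstar ∧ hstar ≤ hbox ∧ hbox < Real.sqrt (2 * ustar) ∧
      0 < hstar ∧ hstar < Real.sqrt (2 * ustar) :=
  stmt_19_general (by exact_mod_cast hd) hν hQ hPh hlam hPhibar hstar_eq hΔ_eq hbox_nn hbox_eq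
    hustar
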